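/- The class group of the quadratic field ℚ(√-39) is cyclic of order 4. -/

import Mathlib

open NumberField Polynomial

section QuadraticBasis

open Module

variable {R S : Type*} [CommRing R] [CommRing S] [Algebra R S] {t n : R} {θ : S}

lemma leftMulMatrix_of_quadratic (b : Basis (Fin 2) R S) (h0 : b 0 = 1) (h1 : b 1 = θ)
    (hθ : θ ^ 2 = algebraMap R S t * θ - algebraMap R S n) (x y : R) :
    Algebra.leftMulMatrix b (algebraMap R S x + algebraMap R S y * θ) =
      !![x, -(n * y); y, x + t * y] := by
  have e0 : (algebraMap R S x + algebraMap R S y * θ) * b 0 = x • b 0 + y • b 1 := by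
    simp [h0, h1, Algebra.smul_def]
  have e1 : (algebraMap R S x + algebraMap R S y * θ) * b 1 =
      (-(n * y)) • b 0 + (x + t * y) • b 1 := by
    simp only [h0, h1, Algebra.smul_def, map_neg, map_mul, map_add]
    linear_combination algebraMap R S y * hθ
  ext i j
  fin_cases j <;> fin_cases i <;>
    simp [Algebra.leftMulMatrix_eq_repr_mul, e0, e1]

lemma norm_of_quadratic (b : Basis (Fin 2) R S) (h0 : b 0 = 1) (h1 : b 1 = θ)
    (hθ : θ ^ 2 = algebraMap R S t * θ - algebraMap R S n) (x y : R) :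
    Algebra.norm R (algebraMap R S x + algebraMap R S y * θ) = x ^ 2 + t * x * y + n * y ^ 2 := by
  rw [Algebra.norm_eq_matrix_det b, leftMulMatrix_of_quadratic b h0 h1 hθ, Matrix.det_fin_two_of]
  ring

lemma trace_of_quadratic (b : Basis (Fin 2) R S) (h0 : b 0 = 1) (h1 : b 1 = θ)
    (hθ : θ ^ 2 = algebraMap R S t * θ - algebraMap R S n) (x y : R) :
    Algebra.trace R S (algebraMap R S x + algebraMap R S y * θ) = 2 * x + t * y := by
  rw [Algebra.trace_eq_matrix_trace b, leftMulMatrix_of_quadratic b h0 h1 hθ,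
    Matrix.trace_fin_two_of]
  ring

lemma discr_of_quadratic (b : Basis (Fin 2) R S) (h0 : b 0 = 1) (h1 : b 1 = θ)
    (hθ : θ ^ 2 = algebraMap R S t * θ - algebraMap R S n) :
    Algebra.discr R b = t ^ 2 - 4 * n := by
  have e00 : b 0 * b 0 = algebraMap R S 1 + algebraMap R S 0 * θ := by simp [h0]
  have e01 : b 0 * b 1 = algebraMap R S 0 + algebraMap R S 1 * θ := by simp [h0, h1]
  have e10 : b 1 * b 0 = algebraMap R S 0 + algebraMap R S 1 * θ := by simp [h0, h1]
  have e11 : b 1 * b 1 = algebraMap R S (-n) + algebraMap R S t * θ := by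
    rw [h1, map_neg]
    linear_combination hθ
  rw [Algebra.discr_def, Matrix.det_fin_two]
  simp only [Algebra.traceMatrix_apply, Algebra.traceForm_apply, e00, e01, e10, e11,
    trace_of_quadratic b h0 h1 hθ]
  ring

end QuadraticBasis

section FieldBasis

open Module

variable {K : Type*} [Field K] [NumberField K]

/-- A root of `X ^ 2 - X + 10` exists in a splitting field of `X ^ 2 + 39`. -/
lemma exists_sq_eq_sub_ten [IsSplittingField ℚ K (X ^ 2 + 39)] :
    ∃ θ : K, θ ^ 2 = θ - 10 := by
  have hdeg : ((X ^ 2 + 39 : ℚ[X]).map (algebraMap ℚ K)).degree ≠ 0 := by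
    rw [degree_map, show (X ^ 2 + 39 : ℚ[X]) = X ^ 2 + C 39 from rfl,
      degree_X_pow_add_C two_pos]
    norm_num
  obtain ⟨s, hs⟩ := (IsSplittingField.splits K (X ^ 2 + 39 : ℚ[X])).exists_eval_eq_zero hdeg
  simp at hs
  refine ⟨(1 + s) / 2, ?_⟩
  field_simp
  linear_combination hs

lemma eq_zero_of_add_mul_eq_zero {θ : K} (hθ : θ ^ 2 = θ - 10) {x y : ℚ}
    (h : (x : K) + y * θ = 0) : x = 0 ∧ y = 0 := by
  have hc : (((2 * x + y) ^ 2 + 39 * y ^ 2 : ℚ) : K) = 0 := by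
    push_cast
    linear_combination 4 * (x + y - y * θ) * h + 4 * (y : K) ^ 2 * hθ
  have hc' : (2 * x + y) ^ 2 + 39 * y ^ 2 = 0 := by exact_mod_cast hc
  have hy : y = 0 := by nlinarith [sq_nonneg (2 * x + y), sq_nonneg y]
  subst hy
  exact ⟨by simpa using h, rfl⟩

lemma exists_eq_add_mul [IsSplittingField ℚ K (X ^ 2 + 39)] {θ : K} (hθ : θ ^ 2 = θ - 10)
    (z : K) : ∃ x y : ℚ, z = x + y * θ := by
  have hz : z ∈ Algebra.adjoin ℚ ((X ^ 2 + 39 : ℚ[X]).rootSet K) := by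
    rw [IsSplittingField.adjoin_rootSet]
    trivial
  induction hz using Algebra.adjoin_induction with
  | mem r hr =>
    have hr' : r ^ 2 + 39 = 0 := by
      simpa [show (39 : ℚ[X]) = C 39 from rfl] using aeval_eq_zero_of_mem_rootSet hr
    have : (r - (2 * θ - 1)) * (r + (2 * θ - 1)) = 0 := by
      linear_combination hr' - 4 * hθ
    rcases mul_eq_zero.mp this with h | h
    · exact ⟨-1, 2, by push_cast; linear_combination h⟩
    · exact ⟨1, -2, by push_cast; linear_combination h⟩
  | algebraMap q => exact ⟨q, 0, by simp⟩
  | add u v _ _ hu hv =>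
    obtain ⟨a, b, rfl⟩ := hu
    obtain ⟨c, d, rfl⟩ := hv
    exact ⟨a + c, b + d, by push_cast; ring⟩
  | mul u v _ _ hu hv =>
    obtain ⟨a, b, rfl⟩ := hu
    obtain ⟨c, d, rfl⟩ := hv
    exact ⟨a * c - 10 * (b * d), a * d + b * c + b * d, by
      push_cast; linear_combination (b * d : K) * hθ⟩

lemma exists_basis_rat [IsSplittingField ℚ K (X ^ 2 + 39)] {θ : K} (hθ : θ ^ 2 = θ - 10) :
    ∃ b : Basis (Fin 2) ℚ K, b 0 = 1 ∧ b 1 = θ := by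
  have hli : LinearIndependent ℚ ![1, θ] := LinearIndependent.pair_iff.mpr fun x y h ↦
    eq_zero_of_add_mul_eq_zero hθ (by simpa [Algebra.smul_def] using h)
  have hsp : ⊤ ≤ Submodule.span ℚ (Set.range ![1, θ]) := fun z _ ↦ by
    obtain ⟨x, y, rfl⟩ := exists_eq_add_mul hθ z
    rw [Matrix.range_cons_cons_empty, Submodule.mem_span_pair]
    exact ⟨x, y, by simp [Algebra.smul_def]⟩
  exact ⟨Basis.mk hli hsp, by simp, by simp⟩

lemma Rat.exists_int_of_thirtyNine_mul_sq {y : ℚ} {k : ℤ} (h : 39 * y ^ 2 = k) :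
    ∃ m : ℤ, y = m := by
  have hint : IsIntegral ℤ (39 * y) := by
    refine IsIntegral.of_pow two_pos ?_
    rw [show (39 * y) ^ 2 = ((39 * k : ℤ) : ℚ) by push_cast; rw [← h]; ring]
    exact isIntegral_algebraMap
  obtain ⟨m, hm⟩ := IsIntegrallyClosed.isIntegral_iff.mp hint
  simp only [eq_intCast] at hm
  have hm2 : m ^ 2 = 39 * k := by
    have : (m : ℚ) ^ 2 = 39 * k := by rw [hm, ← h]; ring
    exact_mod_cast this
  have h3 : (3 : ℤ) ∣ m :=
    Int.prime_three.dvd_of_dvd_pow (n := 2) ⟨13 * k, by linarith⟩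
  have h13 : (13 : ℤ) ∣ m :=
    (Nat.prime_iff_prime_int.mp (by norm_num : Nat.Prime 13)).dvd_of_dvd_pow (n := 2)
      ⟨3 * k, by push_cast; linarith⟩
  obtain ⟨l, rfl⟩ : (39 : ℤ) ∣ m := by omega
  refine ⟨l, ?_⟩
  push_cast at hm
  linarith

lemma exists_int_of_isIntegral [IsSplittingField ℚ K (X ^ 2 + 39)] {θ : K}
    (hθ : θ ^ 2 = θ - 10) {z : K} (hz : IsIntegral ℤ z) : ∃ x y : ℤ, z = x + y * θ := by
  obtain ⟨b, h0, h1⟩ := exists_basis_rat hθ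
  obtain ⟨x, y, rfl⟩ := exists_eq_add_mul hθ z
  have hθ' : θ ^ 2 = algebraMap ℚ K 1 * θ - algebraMap ℚ K 10 := by simpa using hθ
  have htr := trace_of_quadratic b h0 h1 hθ' x y
  have hnm := norm_of_quadratic b h0 h1 hθ' x y
  simp only [eq_ratCast] at htr hnm
  obtain ⟨T, hT⟩ := IsIntegrallyClosed.isIntegral_iff.mp (Algebra.isIntegral_trace (L := ℚ) hz)
  obtain ⟨N, hN⟩ := IsIntegrallyClosed.isIntegral_iff.mp (Algebra.isIntegral_norm ℚ hz)
  rw [htr, eq_intCast] at hT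
  rw [hnm, eq_intCast] at hN
  obtain ⟨m, rfl⟩ := Rat.exists_int_of_thirtyNine_mul_sq (y := y) (k := 4 * N - T ^ 2)
    (by push_cast; rw [hT, hN]; ring)
  have hTm : T ^ 2 + 39 * m ^ 2 = 4 * N := by
    have : (T : ℚ) ^ 2 + 39 * m ^ 2 = 4 * N := by rw [hT, hN]; ring
    exact_mod_cast this
  obtain ⟨a, ha⟩ : (2 : ℤ) ∣ T - m := by
    have h4 : (2 : ℤ) ∣ (T - m) ^ 2 := ⟨2 * N - 19 * m ^ 2 - T * m, by linarith⟩
    exact Int.prime_two.dvd_of_dvd_pow h4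
  refine ⟨a, m, ?_⟩
  have hx : x = a := by
    have : (T : ℚ) - m = 2 * a := by exact_mod_cast ha
    linarith
  simp [hx]

lemma exists_basis_ringOfIntegers [IsSplittingField ℚ K (X ^ 2 + 39)] :
    ∃ (θ : 𝓞 K) (b : Basis (Fin 2) ℤ (𝓞 K)), θ ^ 2 = θ - 10 ∧ b 0 = 1 ∧ b 1 = θ := by
  obtain ⟨θ, hθ⟩ := exists_sq_eq_sub_ten (K := K)
  have hint : IsIntegral ℤ θ := by
    refine ⟨X ^ 2 - X + C 10, by monicity!, ?_⟩
    simp [hθ]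
  obtain ⟨θ, rfl⟩ : ∃ θ' : 𝓞 K, (θ' : K) = θ := ⟨⟨θ, hint⟩, rfl⟩
  have hli : LinearIndependent ℤ ![1, θ] := LinearIndependent.pair_iff.mpr fun x y h ↦ by
    have h' := congrArg (algebraMap (𝓞 K) K) h
    have := eq_zero_of_add_mul_eq_zero hθ (x := x) (y := y) (by simpa using h')
    exact_mod_cast this
  have hsp : ⊤ ≤ Submodule.span ℤ (Set.range ![1, θ]) := fun z _ ↦ by
    obtain ⟨x, y, h⟩ := exists_int_of_isIntegral hθ (RingOfIntegers.isIntegral_coe z)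
    rw [Matrix.range_cons_cons_empty, Submodule.mem_span_pair]
    exact ⟨x, y, RingOfIntegers.ext (by simp [h])⟩
  exact ⟨θ, Basis.mk hli hsp, RingOfIntegers.ext (by simpa only [map_pow, map_sub, map_ofNat] using hθ),
    by simp, by simp⟩

end FieldBasis

section Ideals

open Module Ideal

open scoped nonZeroDivisors

variable {K : Type*} [Field K] {θ : 𝓞 K}

lemma exists_eq_add_mul_of_basis (b : Basis (Fin 2) ℤ (𝓞 K)) (h0 : b 0 = 1) (h1 : b 1 = θ)
    (z : 𝓞 K) : ∃ x y : ℤ, z = x + y * θ := by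
  refine ⟨b.repr z 0, b.repr z 1, ?_⟩
  conv_lhs => rw [← b.sum_repr z]
  simp [h0, h1]

lemma norm_add_mul (b : Basis (Fin 2) ℤ (𝓞 K)) (h0 : b 0 = 1) (h1 : b 1 = θ)
    (hθ : θ ^ 2 = θ - 10) (x y : ℤ) :
    Algebra.norm ℤ (x + y * θ : 𝓞 K) = x ^ 2 + x * y + 10 * y ^ 2 := by
  simpa using norm_of_quadratic (t := 1) (n := 10) b h0 h1 (by simpa using hθ) x y

lemma not_two_dvd_sub (b : Basis (Fin 2) ℤ (𝓞 K)) (h0 : b 0 = 1) (h1 : b 1 = θ) (c : ℤ) :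
    ¬ (2 : 𝓞 K) ∣ θ - c := by
  rintro ⟨z, hz⟩
  have h : b.repr (b 1 - c • b 0) 1 = b.repr ((2 : ℤ) • z) 1 := by
    rw [h0, h1, zsmul_one, hz, zsmul_eq_mul, Int.cast_ofNat]
  simp only [map_sub, map_zsmul, Basis.repr_self, Finsupp.sub_apply, Finsupp.smul_apply,
    Finsupp.single_apply, smul_eq_mul] at h
  norm_num at h
  omega

variable [NumberField K]

lemma discr_eq_neg_thirtyNine (b : Basis (Fin 2) ℤ (𝓞 K)) (h0 : b 0 = 1) (h1 : b 1 = θ)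
    (hθ : θ ^ 2 = θ - 10) : discr K = -39 := by
  rw [← discr_eq_discr K b, discr_of_quadratic (t := 1) (n := 10) b h0 h1 (by simpa using hθ)]
  norm_num

lemma eq_span_pair_of_prime (b : Basis (Fin 2) ℤ (𝓞 K)) (h0 : b 0 = 1) (h1 : b 1 = θ)
    {p : ℕ} (hp : p.Prime) {c : ℤ} {I : Ideal (𝓞 K)} (hI : I ≠ ⊤) (hpI : (p : 𝓞 K) ∈ I)
    (hc : θ - c ∈ I) : I = span {(p : 𝓞 K), θ - c} := by
  refine le_antisymm (fun z hz ↦ ?_) (by simp [span_le, Set.insert_subset_iff, hpI, hc])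
  obtain ⟨x, y, rfl⟩ := exists_eq_add_mul_of_basis b h0 h1 z
  have hm : ((x + y * c : ℤ) : 𝓞 K) ∈ I := by
    have := I.sub_mem hz (I.mul_mem_left (y : 𝓞 K) hc)
    convert this using 1
    push_cast
    ring
  have hdvd : (p : ℤ) ∣ x + y * c := by
    by_contra h
    obtain ⟨u, v, huv⟩ := (Nat.prime_iff_prime_int.mp hp).irreducible.coprime_iff_not_dvd.mpr h
    refine hI ((eq_top_iff_one I).mpr ?_)
    have huv' : (u : 𝓞 K) * p + v * (x + y * c : ℤ) = 1 := by exact_mod_cast huv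
    rw [← huv']
    exact I.add_mem (I.mul_mem_left _ hpI) (I.mul_mem_left _ hm)
  obtain ⟨k, hk⟩ := hdvd
  refine mem_span_pair.mpr ⟨k, y, ?_⟩
  have hk' : (x : 𝓞 K) + y * c = p * k := by exact_mod_cast hk
  linear_combination -hk'

lemma span_two_mul_span_two (hθ : θ ^ 2 = θ - 10) :
    span {2, θ} * span {2, θ - 1} = span {(2 : 𝓞 K)} := by
  rw [span_pair_mul_span_pair]
  refine le_antisymm ?_ ?_
  · rw [span_le]
    rintro z (rfl | rfl | rfl | rfl) <;> rw [SetLike.mem_coe, mem_span_singleton]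
    · exact ⟨2, rfl⟩
    · exact ⟨_, rfl⟩
    · exact ⟨θ, by ring⟩
    · exact ⟨-5, by linear_combination hθ⟩
  · rw [show span {(2 : 𝓞 K)} = span {θ * 2 - 2 * (θ - 1)} by ring_nf, span_singleton_le_iff_mem]
    exact sub_mem (subset_span (by simp)) (subset_span (by simp))

lemma absNorm_span_two (b : Basis (Fin 2) ℤ (𝓞 K)) (h0 : b 0 = 1) (h1 : b 1 = θ)
    (hθ : θ ^ 2 = θ - 10) : absNorm (span {2, θ}) = 2 := by
  have hmul := span_two_mul_span_two hθ
  have hn : absNorm (span {2, θ}) * absNorm (span {2, θ - 1}) = 2 * 2 := by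
    rw [← map_mul, hmul, absNorm_span_singleton]
    have := norm_add_mul b h0 h1 hθ 2 0
    norm_num at this
    simp [this]
  have hP : absNorm (span {2, θ}) ≠ 1 := fun h ↦ by
    rw [absNorm_eq_one_iff.mp h, Ideal.top_mul] at hmul
    have : θ - 1 ∈ span {(2 : 𝓞 K)} := hmul ▸ subset_span (by simp)
    exact not_two_dvd_sub b h0 h1 1 (by simpa [mem_span_singleton] using this)
  have hP' : absNorm (span {2, θ - 1}) ≠ 1 := fun h ↦ by
    rw [absNorm_eq_one_iff.mp h, Ideal.mul_top] at hmul
    have : θ ∈ span {(2 : 𝓞 K)} := hmul ▸ subset_span (by simp)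
    exact not_two_dvd_sub b h0 h1 0 (by simpa [mem_span_singleton] using this)
  exact ((Nat.prime_two.mul_eq_prime_sq_iff hP hP').mp (by rw [hn]; rfl)).1

lemma not_isPrincipal_span_two_pow (b : Basis (Fin 2) ℤ (𝓞 K)) (h0 : b 0 = 1) (h1 : b 1 = θ)
    (hθ : θ ^ 2 = θ - 10) {k : ℕ} (hk : 0 < k) (hk' : k < 4) :
    ¬ (span {2, θ} ^ k).IsPrincipal := by
  rintro ⟨g, hg⟩
  rw [submodule_span_eq] at hg
  have hn := congrArg absNorm hg
  obtain ⟨x, y, rfl⟩ := exists_eq_add_mul_of_basis b h0 h1 g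
  rw [map_pow, absNorm_span_two b h0 h1 hθ, absNorm_span_singleton,
    norm_add_mul b h0 h1 hθ] at hn
  have hn' : (2 : ℤ) ^ k = x ^ 2 + x * y + 10 * y ^ 2 := by
    have hnn : 0 ≤ x ^ 2 + x * y + 10 * y ^ 2 := by nlinarith [sq_nonneg (2 * x + y), sq_nonneg y]
    rw [← Int.natAbs_of_nonneg hnn, ← hn]
    simp
  have h8 : (2 : ℤ) ^ k ≤ 8 := by interval_cases k <;> norm_num
  have hy : y = 0 := by
    have : y ^ 2 < 1 := by nlinarith [sq_nonneg (2 * x + y)]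
    exact pow_eq_zero_iff two_ne_zero |>.mp (by nlinarith [sq_nonneg y])
  subst hy
  have hx : -3 < x ∧ x < 3 := by constructor <;> nlinarith
  obtain ⟨hx1, hx2⟩ := hx
  have hx' : k = 2 ∧ (2 : ℤ) ∣ x := by
    clear hg hn
    interval_cases k <;> interval_cases x <;> omega
  obtain ⟨rfl, l, rfl⟩ := hx'
  have hθm : θ ^ 2 ∈ span {2, θ} ^ 2 := pow_mem_pow (subset_span (by simp)) 2
  rw [hg, mem_span_singleton, hθ] at hθm
  refine not_two_dvd_sub b h0 h1 10 (dvd_trans ⟨l, ?_⟩ (by exact_mod_cast hθm))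
  push_cast
  ring

lemma span_two_ne_zero : span {2, θ} ≠ 0 := by
  intro h
  have : (2 : 𝓞 K) ∈ span {2, θ} := subset_span (by simp)
  rw [h] at this
  simp at this

lemma exists_orderOf_classGroup (b : Basis (Fin 2) ℤ (𝓞 K)) (h0 : b 0 = 1) (h1 : b 1 = θ)
    (hθ : θ ^ 2 = θ - 10) : ∃ C : ClassGroup (𝓞 K), 4 ≤ orderOf C := by
  have hP : span {2, θ} ∈ (Ideal (𝓞 K))⁰ := mem_nonZeroDivisors_of_ne_zero span_two_ne_zero
  refine ⟨ClassGroup.mk0 ⟨span {2, θ}, hP⟩, ?_⟩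
  by_contra! h
  have hpos := orderOf_pos (ClassGroup.mk0 ⟨span {2, θ}, hP⟩)
  have hpow := pow_orderOf_eq_one (ClassGroup.mk0 ⟨span {2, θ}, hP⟩)
  generalize orderOf (ClassGroup.mk0 ⟨span {2, θ}, hP⟩) = n at h hpos hpow
  rw [← map_pow, SubmonoidClass.mk_pow, ClassGroup.mk0_eq_one_iff] at hpow
  exact not_isPrincipal_span_two_pow b h0 h1 hθ hpos h hpow

lemma minkowskiBound_lt_four (b : Basis (Fin 2) ℤ (𝓞 K)) (h0 : b 0 = 1) (h1 : b 1 = θ)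
    (hθ : θ ^ 2 = θ - 10) :
    (4 / Real.pi) ^ InfinitePlace.nrComplexPlaces K *
      ((finrank ℚ K).factorial / (finrank ℚ K) ^ (finrank ℚ K) * √|discr K|) < 4 := by
  have hd := discr_eq_neg_thirtyNine b h0 h1 hθ
  have hr : finrank ℚ K = 2 := by
    rw [← RingOfIntegers.rank K, finrank_eq_card_basis b, Fintype.card_fin]
  have hc : InfinitePlace.nrComplexPlaces K = 1 := by
    have hsum := InfinitePlace.card_add_two_mul_card_eq_rank K
    have hsign := sign_discr K
    rw [hr] at hsum
    have hle : InfinitePlace.nrComplexPlaces K ≤ 1 := by omega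
    interval_cases InfinitePlace.nrComplexPlaces K
    · rw [hd] at hsign
      exact absurd hsign (by decide)
    · rfl
  have hs : √(39 : ℝ) < 6.25 := by
    rw [Real.sqrt_lt' (by norm_num)]
    norm_num
  have hpi := Real.pi_gt_d2
  rw [hd, hr, hc]
  norm_num [Nat.factorial]
  rw [div_mul_eq_mul_div, div_lt_iff₀ Real.pi_pos]
  linarith

lemma eq_of_absNorm_lt_four (b : Basis (Fin 2) ℤ (𝓞 K)) (h0 : b 0 = 1) (h1 : b 1 = θ)
    (hθ : θ ^ 2 = θ - 10) {I : Ideal (𝓞 K)} (hI : I ≠ 0) (hlt : absNorm I < 4) :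
    I = ⊤ ∨ I = span {2, θ} ∨ I = span {2, θ - 1} ∨ I = span {3, θ + 1} := by
  have hmem := absNorm_mem I
  have hpos : absNorm I ≠ 0 := by rwa [Ne, absNorm_eq_zero_iff]
  rcases eq_or_ne I ⊤ with htop | htop
  · exact .inl htop
  have hne1 : absNorm I ≠ 1 := by rwa [Ne, absNorm_eq_one_iff]
  right
  obtain h2 | h3 : absNorm I = 2 ∨ absNorm I = 3 := by omega
  · have := isPrime_of_irreducible_absNorm (h2 ▸ Nat.prime_two)
    rw [h2] at hmem
    have hprod : θ * (θ - 1) ∈ I := by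
      rw [show θ * (θ - 1) = -5 * (2 : ℕ) by push_cast; linear_combination hθ]
      exact I.mul_mem_left _ hmem
    rcases this.mem_or_mem hprod with h | h
    · left
      simpa using eq_span_pair_of_prime b h0 h1 Nat.prime_two (c := 0) htop hmem (by simpa using h)
    · right; left
      simpa using eq_span_pair_of_prime b h0 h1 Nat.prime_two (c := 1) htop hmem (by simpa using h)
  · have := isPrime_of_irreducible_absNorm (h3 ▸ Nat.prime_three)
    rw [h3] at hmem
    have hsq : (θ + 1) ^ 2 ∈ I := by
      rw [show (θ + 1) ^ 2 = (θ - 3) * (3 : ℕ) by push_cast; linear_combination hθ]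
      exact I.mul_mem_left _ hmem
    right; right
    simpa using eq_span_pair_of_prime b h0 h1 Nat.prime_three (c := -1) htop hmem
      (by simpa using this.mem_of_pow_mem 2 hsq)

lemma card_classGroup_le_four (b : Basis (Fin 2) ℤ (𝓞 K)) (h0 : b 0 = 1) (h1 : b 1 = θ)
    (hθ : θ ^ 2 = θ - 10) : Nat.card (ClassGroup (𝓞 K)) ≤ 4 := by
  classical
  let s : Finset (Ideal (𝓞 K)) := {⊤, span {2, θ}, span {2, θ - 1}, span {3, θ + 1}}
  have h (C : ClassGroup (𝓞 K)) : ∃ I : (Ideal (𝓞 K))⁰, ClassGroup.mk0 I = C ∧ I.1 ∈ s := by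
    obtain ⟨I, rfl, hI⟩ := exists_ideal_in_class_of_norm_le C
    refine ⟨I, rfl, ?_⟩
    have hlt : absNorm I.1 < 4 := by
      exact_mod_cast hI.trans_lt (minkowskiBound_lt_four b h0 h1 hθ)
    simpa [s] using eq_of_absNorm_lt_four b h0 h1 hθ (nonZeroDivisors.coe_ne_zero I) hlt
  choose f hf hs using h
  have hinj : Function.Injective fun C ↦ (⟨(f C).1, hs C⟩ : s) := fun C D hCD ↦ by
    dsimp only at hCD
    rw [← hf C, ← hf D, show f C = f D from Subtype.ext (congrArg Subtype.val hCD :)]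
  calc Nat.card (ClassGroup (𝓞 K)) ≤ Nat.card s := Nat.card_le_card_of_injective _ hinj
    _ = s.card := by simp
    _ ≤ 4 := Finset.card_le_four

end Ideals

/-- The class group of `ℚ(√-39)` is cyclic of order 4. -/
theorem classGroup_sqrt_neg39 (K : Type*) [Field K] [NumberField K]
    [IsSplittingField ℚ K (X ^ 2 + 39)] :
    IsCyclic (ClassGroup (𝓞 K)) ∧ NumberField.classNumber K = 4 := by
  obtain ⟨θ, b, hθ, h0, h1⟩ := exists_basis_ringOfIntegers (K := K)
  obtain ⟨C, hC⟩ := exists_orderOf_classGroup b h0 h1 hθ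
  have hcard := card_classGroup_le_four b h0 h1 hθ
  have hle : orderOf C ≤ Nat.card (ClassGroup (𝓞 K)) := orderOf_le_card
  refine ⟨isCyclic_of_orderOf_eq_card C (by omega), ?_⟩
  rw [classNumber, ← Nat.card_eq_fintype_card]
  omega
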